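/- Let n ∈ ℕ, J : Fin n → Fin n → ℝ, h : Fin n → ℝ, μ ∈ ℝ, and consider the Max-Cut graph associated with (J, h, μ). Let α ∈ ℝ with 0 < α ≤ 1 and let z_GW ∈ ℝ satisfy both the Goemans–Williamson guarantee z_GW - W⁻ ≥ α * (z* - W⁻) and z_GW ≤ z*. Let Hmin be the minimum of H(σ) over all spin configurations σ and LB_GW := -(2/α) * z_GW + (2/α - 2) * W⁻ + W. Then the approximation error satisfies Hmin - LB_GW ≤ (2/α - 2) * (z* - W⁻). -/

import Mathlib

/-!
A set `S` of vertices of the associated graph encodes the spin configuration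
`σ i = τ 0 * τ (i + 1)`, where `τ = 1` on `S` and `-1` off it: vertex `0` carries the external field,
and the global sign of `τ` is gauged away. Since `τ u * τ v` is `-1` on cut pairs and `1` on all others,
`H(σ) = W - 2 g(S)` (`isingH_cutSpin`). Taking `S` to be a maximum cut gives `Hmin ≤ W - 2 z*`, after
which the claimed bound reduces to `(2 / α) * z_GW ≤ (2 / α) * z*`.
-/

open Finset

noncomputable section

/-- Cut value `g(S)`: sum of weights over pairs `u < v` with exactly one endpoint in `S`. -/
def cutValue {N : ℕ} (w : Fin N → Fin N → ℝ) (S : Finset (Fin N)) : ℝ :=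
  ∑ u, ∑ v, if u < v ∧ ((u ∈ S ∧ v ∉ S) ∨ (u ∉ S ∧ v ∈ S)) then w u v else 0

/-- Total weight `W`: sum of weights over pairs `u < v`. -/
def totalWeight {N : ℕ} (w : Fin N → Fin N → ℝ) : ℝ :=
  ∑ u, ∑ v, if u < v then w u v else 0

/-- Negative weight `W⁻`: sum of negative weights over pairs `u < v`. -/
def negWeight {N : ℕ} (w : Fin N → Fin N → ℝ) : ℝ :=
  ∑ u, ∑ v, if u < v ∧ w u v < 0 then w u v else 0

/-- Maximum cut value `z*`: maximum of `g(S)` over all subsets `S` of `Fin N`. -/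
def maxCut {N : ℕ} (w : Fin N → Fin N → ℝ) : ℝ :=
  Finset.univ.sup' Finset.univ_nonempty (cutValue w)

/-- The Ising Hamiltonian `H(σ)`. -/
def isingH {n : ℕ} (J : Fin n → Fin n → ℝ) (h : Fin n → ℝ) (μ : ℝ) (σ : Fin n → ℝ) : ℝ :=
  -(∑ i, ∑ j, if i < j then J i j * σ i * σ j else 0) - μ * ∑ i, h i * σ i

/-- A spin configuration takes values in `{-1, 1}`. -/
def IsSpin {n : ℕ} (σ : Fin n → ℝ) : Prop := ∀ i, σ i ∈ ({-1, 1} : Set ℝ)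

/-- The `±1` indicator of a vertex set: `1` on `S` and `-1` off it. -/
def cutSign {N : ℕ} (S : Finset (Fin N)) (u : Fin N) : ℝ := if u ∈ S then 1 else -1

lemma cutSign_mul_self {N : ℕ} (S : Finset (Fin N)) (u : Fin N) :
    cutSign S u * cutSign S u = 1 := by
  unfold cutSign; split_ifs <;> norm_num

lemma sum_cutSign {N : ℕ} (w : Fin N → Fin N → ℝ) (S : Finset (Fin N)) :
    (∑ u, ∑ v, if u < v then w u v * (cutSign S u * cutSign S v) else 0) =
      totalWeight w - 2 * cutValue w S := by
  unfold totalWeight cutValue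
  simp only [Finset.mul_sum, ← Finset.sum_sub_distrib]
  refine Finset.sum_congr rfl fun u _ => Finset.sum_congr rfl fun v _ => ?_
  unfold cutSign
  by_cases huv : u < v <;> by_cases hu : u ∈ S <;> by_cases hv : v ∈ S <;>
    simp [huv, hu, hv]
  all_goals ring

/-- The spin configuration of a vertex set: spin `i` is `1` exactly when the vertices `0` and `i + 1`
lie on the same side of the cut. -/
def cutSpin {n : ℕ} (S : Finset (Fin (n + 1))) (i : Fin n) : ℝ := cutSign S 0 * cutSign S i.succ

lemma isSpin_cutSpin {n : ℕ} (S : Finset (Fin (n + 1))) : IsSpin (cutSpin S) := by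
  intro i
  unfold cutSpin cutSign
  split_ifs <;> simp

lemma isingH_cutSpin {n : ℕ} (J : Fin n → Fin n → ℝ) (h : Fin n → ℝ) (μ : ℝ)
    (w : Fin (n + 1) → Fin (n + 1) → ℝ)
    (hwJ : ∀ i j : Fin n, i < j → w i.succ j.succ = -J i j)
    (hwh : ∀ i : Fin n, w 0 i.succ = -μ * h i) (S : Finset (Fin (n + 1))) :
    isingH J h μ (cutSpin S) = totalWeight w - 2 * cutValue w S := by
  rw [← sum_cutSign, Fin.sum_univ_succ]
  simp only [Fin.sum_univ_succ (n := n), lt_irrefl, Fin.not_lt_zero, Fin.succ_pos,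
    Fin.succ_lt_succ_iff, if_true, if_false, zero_add]
  unfold isingH
  rw [Finset.mul_sum, sub_eq_add_neg, add_comm, ← Finset.sum_neg_distrib, ← Finset.sum_neg_distrib]
  congr 1
  · refine Finset.sum_congr rfl fun i _ => ?_
    rw [hwh, cutSpin]; ring
  · refine Finset.sum_congr rfl fun i _ => ?_
    rw [← Finset.sum_neg_distrib]
    refine Finset.sum_congr rfl fun j _ => ?_
    split_ifs with hij
    · rw [hwJ i j hij, cutSpin, cutSpin]
      linear_combination
        (-(J i j * cutSign S i.succ * cutSign S j.succ)) * cutSign_mul_self S 0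
    · exact neg_zero

theorem gw_approx_error {n : ℕ} (J : Fin n → Fin n → ℝ) (h : Fin n → ℝ) (μ : ℝ)
    (w : Fin (n + 1) → Fin (n + 1) → ℝ)
    (hsymm : ∀ u v, w u v = w v u) (hdiag : ∀ u, w u u = 0)
    (hwJ : ∀ i j : Fin n, i < j → w i.succ j.succ = -J i j)
    (hwh : ∀ i : Fin n, w 0 i.succ = -μ * h i)
    (α : ℝ) (hα0 : 0 < α) (hα1 : α ≤ 1)
    (zGW : ℝ) (hGW : zGW - negWeight w ≥ α * (maxCut w - negWeight w))
    (hle : zGW ≤ maxCut w)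
    (Hmin : ℝ)
    (hHmin : IsLeast {x : ℝ | ∃ σ : Fin n → ℝ, IsSpin σ ∧ isingH J h μ σ = x} Hmin) :
    Hmin - (-(2 / α) * zGW + (2 / α - 2) * negWeight w + totalWeight w) ≤
      (2 / α - 2) * (maxCut w - negWeight w) := by
  obtain ⟨S, -, hS⟩ := Finset.exists_mem_eq_sup' Finset.univ_nonempty (cutValue w)
  have hmin : Hmin ≤ totalWeight w - 2 * maxCut w :=
    (hHmin.2 ⟨cutSpin S, isSpin_cutSpin S, isingH_cutSpin J h μ w hwJ hwh S⟩).trans_eq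
      (by rw [maxCut, hS])
  have hscaled : 2 / α * zGW ≤ 2 / α * maxCut w := by gcongr
  linarith

end
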